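/- Let 𝒰 ⊆ B(K₁,L₁) and 𝒱 ⊆ B(H₂,K₂) be ternary rings of operators, let R_𝒰 ⊆ B(K₁) be the norm-closed linear span of {u₁*u₂ : u₁,u₂ ∈ 𝒰} and R_𝒱 ⊆ B(H₂) the norm-closed linear span of {v₁*v₂ : v₁,v₂ ∈ 𝒱} (these are C*-subalgebras). Suppose π : R_𝒰 → B(H) and ρ : R_𝒱 → B(H) are *-homomorphisms with commuting ranges. Then there exist complex Hilbert spaces K and L and semi-commuting ternary morphisms φ : 𝒰 → B(K,L) and ψ : 𝒱 → B(H,K) such that π(u₁*u₂) ρ(v₁*v₂) = ψ(v₁)* φ(u₁)* φ(u₂) ψ(v₂) for all u₁,u₂ ∈ 𝒰 and v₁,v₂ ∈ 𝒱. -/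

import Mathlib

open ContinuousLinearMap

universe u

/-- A bundled complex Hilbert space. -/
structure HilbertC : Type (u + 1) where
  carrier : Type u
  [nacg : NormedAddCommGroup carrier]
  [ips : InnerProductSpace ℂ carrier]
  [cs : CompleteSpace carrier]

attribute [instance] HilbertC.nacg HilbertC.ips HilbertC.cs

/-- A linear map `φ` on a TRO `𝒰 ⊆ B(K₀, L₀)` is a ternary morphism if it
satisfies `φ(S T* R) = φ(S) φ(T)* φ(R)` for all `S, T, R ∈ 𝒰`. -/
def IsTernaryHom
    {K₀ L₀ K L : Type*}
    [NormedAddCommGroup K₀] [InnerProductSpace ℂ K₀] [CompleteSpace K₀]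
    [NormedAddCommGroup L₀] [InnerProductSpace ℂ L₀] [CompleteSpace L₀]
    [NormedAddCommGroup K] [InnerProductSpace ℂ K] [CompleteSpace K]
    [NormedAddCommGroup L] [InnerProductSpace ℂ L] [CompleteSpace L]
    (𝒰 : Submodule ℂ (K₀ →L[ℂ] L₀)) (φ : ↥𝒰 →ₗ[ℂ] (K →L[ℂ] L)) : Prop :=
  ∀ (s t r : 𝒰)
    (h : (s : K₀ →L[ℂ] L₀) ∘L (adjoint (t : K₀ →L[ℂ] L₀)) ∘L (r : K₀ →L[ℂ] L₀) ∈ 𝒰),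
    φ ⟨(s : K₀ →L[ℂ] L₀) ∘L (adjoint (t : K₀ →L[ℂ] L₀)) ∘L (r : K₀ →L[ℂ] L₀), h⟩
      = φ s ∘L (adjoint (φ t)) ∘L φ r

/-- A function `π : B(K₀) → B(H)` is a *-homomorphism on a subset `R`. -/
def IsStarHomOn
    {K₀ H : Type*}
    [NormedAddCommGroup K₀] [InnerProductSpace ℂ K₀] [CompleteSpace K₀]
    [NormedAddCommGroup H] [InnerProductSpace ℂ H] [CompleteSpace H]
    (R : Set (K₀ →L[ℂ] K₀)) (π : (K₀ →L[ℂ] K₀) → (H →L[ℂ] H)) : Prop :=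
  (∀ b₁ ∈ R, ∀ b₂ ∈ R, π (b₁ + b₂) = π b₁ + π b₂) ∧
  (∀ (c : ℂ), ∀ b ∈ R, π (c • b) = c • π b) ∧
  (∀ b₁ ∈ R, ∀ b₂ ∈ R, π (b₁ * b₂) = π b₁ * π b₂) ∧
  (∀ b ∈ R, π (star b) = star (π b))

/-!
The `B(H)`-valued kernel `k(v, w) = ρ(v* w)` on `𝒱` is positive: for a row `V = (vⱼ)` and `t > 0`,
the operators `wⱼ = (V V* + t)⁻¹ vⱼ` lie in `𝒱`, and applying `ρ` to
`vᵢ* vⱼ = ∑ₘ vᵢ* vₘ vₘ* wⱼ + t vᵢ* wⱼ` shows that `-t` is not in the spectrum of the self-adjoint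
matrix `k(vᵢ, vⱼ)`. The kernel functions `ψ v : H → K` of the reproducing kernel Hilbert space `K`
of `k` form a ternary morphism with `ψ(v)* ψ(w) = ρ(v* w)`.

An operator on `H` commuting with every `ψ(v)* ψ(w)` lifts to `K` by `ψ v h ↦ ψ v (T h)`, uniquely
and compatibly with products and adjoints. So the kernel `π(u₁* u₂)` lifts to a kernel on `𝒰` with
values in `B(K)`, which commutes with every `ψ(v) ψ(w)*`; its reproducing kernel Hilbert space
gives `L` and `φ`.
-/

section CStarAlgebra

theorem isUnit_of_isSelfAdjoint_of_mul_eq_one {R : Type*} [Monoid R] [StarMul R] {a b : R}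
    (ha : IsSelfAdjoint a) (hab : a * b = 1) : IsUnit a := by
  have hba : star b * a = 1 := by
    simpa only [star_mul, ha.star_eq, star_one] using congrArg star hab
  exact isUnit_iff_exists_and_exists.2 ⟨⟨b, hab⟩, ⟨star b, hba⟩⟩

variable {B : Type*} [CStarAlgebra B]

theorem nonneg_of_forall_isUnit_add_algebraMap [PartialOrder B] [StarOrderedRing B]
    {a : B} (ha : IsSelfAdjoint a)
    (h : ∀ t : ℝ, 0 < t → IsUnit (a + algebraMap ℝ B t)) : 0 ≤ a := by
  rw [StarOrderedRing.nonneg_iff_spectrum_nonneg (R := ℝ) a ha]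
  intro x hx
  by_contra! hneg
  refine hx ?_
  have hunit : IsUnit (-(a + algebraMap ℝ B (-x))) := (h (-x) (neg_pos.2 hneg)).neg
  rwa [map_neg, ← sub_eq_add_neg, neg_sub] at hunit

theorem exists_eq_star_mul_self_of_forall_exists_eq_mul_add_smul {a : B} (ha : IsSelfAdjoint a)
    (h : ∀ t : ℝ, 0 < t → ∃ b : B, a = a * b + t • b) : ∃ s : B, a = star s * s := by
  let := CStarAlgebra.spectralOrder B
  have := CStarAlgebra.spectralOrderedRing B
  refine CStarAlgebra.nonneg_iff_eq_star_mul_self.1 <|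
    nonneg_of_forall_isUnit_add_algebraMap ha fun t ht => ?_
  obtain ⟨b, hb⟩ := h t ht
  have hmul : (a + algebraMap ℝ B t) * (1 - b) = algebraMap ℝ B t := by
    calc (a + algebraMap ℝ B t) * (1 - b)
        = a + algebraMap ℝ B t - (a * b + t • b) := by
          rw [mul_sub, mul_one, add_mul, ← Algebra.smul_def]
      _ = algebraMap ℝ B t := by rw [← hb, add_sub_cancel_left]
  refine isUnit_of_isSelfAdjoint_of_mul_eq_one (b := (1 - b) * algebraMap ℝ B t⁻¹)
    (ha.add (.algebraMap B (.all t))) ?_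
  rw [← mul_assoc, hmul, ← map_mul, mul_inv_cancel₀ ht.ne', map_one]

end CStarAlgebra

theorem posSemidef_of_forall_finset_submatrix {X R : Type*} [Ring R] [PartialOrder R] [StarRing R]
    {M : Matrix X X R}
    (h : ∀ s : Finset X, (M.submatrix ((↑) : s → X) (↑)).PosSemidef) : M.PosSemidef := by
  classical
  refine ⟨?_, fun x => ?_⟩
  · ext i j
    exact (h {i, j}).isHermitian.apply ⟨i, by simp⟩ ⟨j, by simp⟩
  · have hrestrict (g : X → R → R) :
        ((x.subtypeDomain (· ∈ x.support)).sum fun i xi => g i xi) = x.sum g :=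
      Finsupp.sum_subtypeDomain_index fun _ => id
    calc 0 ≤ _ := (h x.support).2 (x.subtypeDomain (· ∈ x.support))
      _ = (x.subtypeDomain (· ∈ x.support)).sum fun i xi =>
            x.sum fun j xj => star xi * M i j * xj :=
          Finsupp.sum_congr fun i _ => hrestrict fun j xj => star (x i) * M i j * xj
      _ = x.sum fun i xi => x.sum fun j xj => star xi * M i j * xj :=
          hrestrict fun i xi => x.sum fun j xj => star xi * M i j * xj

section TRO

/-- A concrete ternary ring of operators: a norm-closed space of operators stable under the ternary
product `S T* R`. -/
structure IsTRO {H K : Type*} [NormedAddCommGroup H] [InnerProductSpace ℂ H] [CompleteSpace H]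
    [NormedAddCommGroup K] [InnerProductSpace ℂ K] [CompleteSpace K]
    (𝒱 : Submodule ℂ (H →L[ℂ] K)) : Prop where
  isClosed : IsClosed (𝒱 : Set (H →L[ℂ] K))
  comp_adjoint_comp_mem : ∀ S ∈ 𝒱, ∀ T ∈ 𝒱, ∀ R ∈ 𝒱, S ∘L adjoint T ∘L R ∈ 𝒱

/-- The unital *-algebra of operators `b` such that `b` and `b*` map `𝒱` into itself by left
multiplication. For a TRO it contains every `v w*`, hence also resolvents of such operators. -/
def leftMultipliers {H K : Type*} [NormedAddCommGroup H] [NormedSpace ℂ H]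
    [NormedAddCommGroup K] [InnerProductSpace ℂ K] [CompleteSpace K]
    (𝒱 : Submodule ℂ (H →L[ℂ] K)) : StarSubalgebra ℂ (K →L[ℂ] K) where
  carrier := {b | ∀ v ∈ 𝒱, b ∘L v ∈ 𝒱 ∧ star b ∘L v ∈ 𝒱}
  mul_mem' := by
    intro a b ha hb v hv
    rw [star_mul]
    exact ⟨(ha _ (hb v hv).1).1, (hb _ (ha v hv).2).2⟩
  add_mem' := by
    intro a b ha hb v hv
    rw [star_add, add_comp, add_comp]
    exact ⟨𝒱.add_mem (ha v hv).1 (hb v hv).1, 𝒱.add_mem (ha v hv).2 (hb v hv).2⟩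
  algebraMap_mem' := by
    intro c v hv
    rw [← algebraMap_star_comm]
    exact ⟨𝒱.smul_mem c hv, 𝒱.smul_mem (star c) hv⟩
  star_mem' := by
    intro a ha v hv
    rw [star_star]
    exact (ha v hv).symm

theorem isClosed_leftMultipliers {H K : Type*} [NormedAddCommGroup H] [NormedSpace ℂ H]
    [NormedAddCommGroup K] [InnerProductSpace ℂ K] [CompleteSpace K]
    {𝒱 : Submodule ℂ (H →L[ℂ] K)} (h𝒱 : IsClosed (𝒱 : Set (H →L[ℂ] K))) :
    IsClosed (leftMultipliers 𝒱 : Set (K →L[ℂ] K)) := by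
  have hcomp (v : H →L[ℂ] K) : Continuous fun b : K →L[ℂ] K => b ∘L v := by fun_prop
  change IsClosed {b : K →L[ℂ] K | ∀ v ∈ 𝒱, b ∘L v ∈ 𝒱 ∧ star b ∘L v ∈ 𝒱}
  simp only [Set.ofPred_forall]
  exact isClosed_biInter fun v _ =>
    (h𝒱.preimage (hcomp v)).inter (h𝒱.preimage ((hcomp v).comp continuous_star))

variable {H K : Type*} [NormedAddCommGroup H] [InnerProductSpace ℂ H] [CompleteSpace H]
  [NormedAddCommGroup K] [InnerProductSpace ℂ K] [CompleteSpace K]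
  {𝒱 : Submodule ℂ (H →L[ℂ] K)}

namespace IsTRO

/-- The ternary product `x y* z` as an element of the TRO. -/
noncomputable def triple (h𝒱 : IsTRO 𝒱) (x y z : 𝒱) : 𝒱 :=
  ⟨(x : H →L[ℂ] K) ∘L adjoint (y : H →L[ℂ] K) ∘L (z : H →L[ℂ] K),
    h𝒱.comp_adjoint_comp_mem _ x.2 _ y.2 _ z.2⟩

theorem comp_adjoint_mem_leftMultipliers (h𝒱 : IsTRO 𝒱) (v w : 𝒱) :
    (v : H →L[ℂ] K) ∘L adjoint (w : H →L[ℂ] K) ∈ leftMultipliers 𝒱 := by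
  intro x hx
  rw [star_eq_adjoint, adjoint_comp, adjoint_adjoint]
  exact ⟨h𝒱.comp_adjoint_comp_mem _ v.2 _ w.2 _ hx, h𝒱.comp_adjoint_comp_mem _ w.2 _ v.2 _ hx⟩

theorem exists_eq_sum_triple_add_smul (h𝒱 : IsTRO 𝒱) {ι : Type*} [Fintype ι] (v : ι → 𝒱)
    {t : ℝ} (ht : 0 < t) :
    ∃ w : ι → 𝒱, ∀ j, v j = ∑ m, h𝒱.triple (v m) (v m) (w j) + (t : ℂ) • w j := by
  let a : K →L[ℂ] K := ∑ m, (v m : H →L[ℂ] K) ∘L adjoint (v m : H →L[ℂ] K)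
  have ha_nonneg : 0 ≤ a := Finset.sum_nonneg fun m _ =>
    (nonneg_iff_isPositive _).2 (isPositive_self_comp_adjoint _)
  have hunit : IsUnit (a + algebraMap ℂ (K →L[ℂ] K) t) :=
    (IsStrictlyPositive.nonneg_add ha_nonneg
      (isStrictlyPositive_algebraMap (𝕜 := ℝ) ht)).isUnit
  have hmem : a + algebraMap ℂ (K →L[ℂ] K) t ∈ leftMultipliers 𝒱 :=
    add_mem (sum_mem fun m _ => h𝒱.comp_adjoint_mem_leftMultipliers (v m) (v m))
      (algebraMap_mem _ _)
  have : IsClosed (leftMultipliers 𝒱 : Set (K →L[ℂ] K)) := isClosed_leftMultipliers h𝒱.isClosed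
  obtain ⟨c, hc⟩ := ((leftMultipliers 𝒱).coe_isUnit (a := ⟨_, hmem⟩).1 hunit).exists_right_inv
  have hac : (a + algebraMap ℂ (K →L[ℂ] K) t) * (c : K →L[ℂ] K) = 1 := congrArg Subtype.val hc
  refine ⟨fun j => ⟨(c : K →L[ℂ] K) ∘L (v j : H →L[ℂ] K), (c.2 _ (v j).2).1⟩, fun j => ?_⟩
  apply Subtype.ext
  calc (v j : H →L[ℂ] K)
      = ((a + algebraMap ℂ (K →L[ℂ] K) t) * (c : K →L[ℂ] K)) ∘L (v j : H →L[ℂ] K) := by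
        rw [hac]; rfl
    _ = _ := by
        ext x
        simp [a, triple, add_mul, Algebra.algebraMap_eq_smul_one, sum_apply]

end IsTRO

end TRO

section TernaryKernel

/-- A kernel on `𝒱` that behaves like `k v w = ρ (v* w)` for a *-homomorphism `ρ` on the right
C*-algebra of the TRO `𝒱`: it is linear in the second variable, hermitian, and satisfies
`k v (w x* y) = k v w * k x y`. -/
structure IsTernaryKernel {H K B : Type*} [NormedAddCommGroup H] [InnerProductSpace ℂ H]
    [CompleteSpace H] [NormedAddCommGroup K] [InnerProductSpace ℂ K] [CompleteSpace K]
    [CStarAlgebra B] (𝒱 : Submodule ℂ (H →L[ℂ] K)) (k : 𝒱 → 𝒱 → B) : Prop where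
  isLinearMap : ∀ v, IsLinearMap ℂ (k v)
  star_apply : ∀ v w, star (k v w) = k w v
  apply_triple : ∀ (v w x y : 𝒱)
    (h : (w : H →L[ℂ] K) ∘L adjoint (x : H →L[ℂ] K) ∘L (y : H →L[ℂ] K) ∈ 𝒱),
    k v ⟨_, h⟩ = k v w * k x y

variable {H K : Type*} [NormedAddCommGroup H] [InnerProductSpace ℂ H] [CompleteSpace H]
  [NormedAddCommGroup K] [InnerProductSpace ℂ K] [CompleteSpace K]
  {𝒱 : Submodule ℂ (H →L[ℂ] K)}

namespace IsTernaryKernel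

section Positivity

variable {B : Type*} [CStarAlgebra B] {k : 𝒱 → 𝒱 → B}

theorem apply_sum_triple_add_smul (hk : IsTernaryKernel 𝒱 k) (h𝒱 : IsTRO 𝒱) {ι : Type*}
    [Fintype ι] (u y : 𝒱) (w x : ι → 𝒱) (c : ℂ) :
    k u (∑ m, h𝒱.triple (w m) (x m) y + c • y) = ∑ m, k u (w m) * k (x m) y + c • k u y := by
  have hsum : k u (∑ m, h𝒱.triple (w m) (x m) y) = ∑ m, k u (h𝒱.triple (w m) (x m) y) :=
    map_sum ((hk.isLinearMap u).mk' (k u)) _ _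
  rw [(hk.isLinearMap u).map_add, (hk.isLinearMap u).map_smul, hsum]
  exact congrArg (· + c • k u y) (Finset.sum_congr rfl fun m _ => hk.apply_triple _ _ _ _ _)

variable [PartialOrder B] [StarOrderedRing B]

theorem posSemidef_gram (hk : IsTernaryKernel 𝒱 k) (h𝒱 : IsTRO 𝒱) {ι : Type*} [Finite ι]
    (v : ι → 𝒱) : (Matrix.of fun i j => k (v i) (v j)).PosSemidef := by
  classical
  have := Fintype.ofFinite ι
  let M : CStarMatrix ι ι B := CStarMatrix.ofMatrix fun i j => k (v i) (v j)
  have hM : IsSelfAdjoint M := CStarMatrix.ext fun i j => hk.star_apply (v j) (v i)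
  obtain ⟨S, hS⟩ : ∃ S, M = star S * S := by
    refine exists_eq_star_mul_self_of_forall_exists_eq_mul_add_smul hM fun t ht => ?_
    obtain ⟨w, hw⟩ := h𝒱.exists_eq_sum_triple_add_smul v ht
    refine ⟨CStarMatrix.ofMatrix fun i j => k (v i) (w j), CStarMatrix.ext fun i j => ?_⟩
    exact (congrArg (k (v i)) (hw j)).trans
      (hk.apply_sum_triple_add_smul h𝒱 (v i) (w j) v v t)
  exact (congrArg Matrix.PosSemidef hS).mpr
    (Matrix.posSemidef_conjTranspose_mul_self (CStarMatrix.ofMatrix.symm S))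

theorem posSemidef (hk : IsTernaryKernel 𝒱 k) (h𝒱 : IsTRO 𝒱) : (Matrix.of k).PosSemidef :=
  posSemidef_of_forall_finset_submatrix fun _ => hk.posSemidef_gram h𝒱 _

end Positivity

end IsTernaryKernel

end TernaryKernel

section Intertwining

/-- The vectors `ψ v h` span a dense subspace of the codomain of the operators `ψ v`. -/
def HasDenseSpan {X H K : Type*} [NormedAddCommGroup H] [InnerProductSpace ℂ H]
    [NormedAddCommGroup K] [InnerProductSpace ℂ K] (ψ : X → H →L[ℂ] K) : Prop :=
  Dense (Submodule.span ℂ {y | ∃ v h, ψ v h = y} : Set K)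

/-- `T'` is a lift of `T` along the family of operators `ψ`. -/
def Intertwines {X H K : Type*} [NormedAddCommGroup H] [InnerProductSpace ℂ H]
    [NormedAddCommGroup K] [InnerProductSpace ℂ K] (ψ : X → H →L[ℂ] K) (T : H →L[ℂ] H)
    (T' : K →L[ℂ] K) : Prop :=
  ∀ v, T' ∘L ψ v = ψ v ∘L T

variable {X H K : Type*} [NormedAddCommGroup H] [InnerProductSpace ℂ H]
  [NormedAddCommGroup K] [InnerProductSpace ℂ K] {ψ : X → H →L[ℂ] K}

namespace HasDenseSpan

theorem ext (hψ : HasDenseSpan ψ) {E : Type*} [NormedAddCommGroup E] [NormedSpace ℂ E]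
    {A B : K →L[ℂ] E} (h : ∀ v, A ∘L ψ v = B ∘L ψ v) : A = B := by
  refine ContinuousLinearMap.ext_on hψ ?_
  rintro _ ⟨v, x, rfl⟩
  exact DFunLike.congr_fun (h v) x

theorem ext_adjoint [CompleteSpace H] [CompleteSpace K] (hψ : HasDenseSpan ψ) {E : Type*}
    [NormedAddCommGroup E] [InnerProductSpace ℂ E] [CompleteSpace E] {A B : E →L[ℂ] K}
    (h : ∀ v, adjoint (ψ v) ∘L A = adjoint (ψ v) ∘L B) : A = B := by
  refine adjoint.injective (hψ.ext fun v => ?_)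
  simpa only [adjoint_comp, adjoint_adjoint] using congrArg adjoint (h v)

theorem eq_of_intertwines (hψ : HasDenseSpan ψ) {T : H →L[ℂ] H} {A B : K →L[ℂ] K}
    (hA : Intertwines ψ T A) (hB : Intertwines ψ T B) : A = B :=
  hψ.ext fun v => (hA v).trans (hB v).symm

end HasDenseSpan

namespace Intertwines

variable {S T : H →L[ℂ] H} {S' T' : K →L[ℂ] K}

theorem add (hS : Intertwines ψ S S') (hT : Intertwines ψ T T') :
    Intertwines ψ (S + T) (S' + T') := fun v => by
  rw [add_comp, hS, hT, comp_add]

theorem smul (c : ℂ) (hT : Intertwines ψ T T') : Intertwines ψ (c • T) (c • T') := fun v => by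
  rw [smul_comp, hT, comp_smul]

theorem mul (hS : Intertwines ψ S S') (hT : Intertwines ψ T T') :
    Intertwines ψ (S * T) (S' * T') := fun v => by
  rw [mul_def, mul_def, comp_assoc, hT, ← comp_assoc, hS, comp_assoc]

variable [CompleteSpace H] [CompleteSpace K]

theorem adjoint_comp_star (hT : Intertwines ψ T T') (v : X) :
    adjoint (ψ v) ∘L star T' = star T ∘L adjoint (ψ v) := by
  simpa only [star_eq_adjoint, adjoint_comp] using congrArg adjoint (hT v)

protected theorem star (hψ : HasDenseSpan ψ) (hcomm : ∀ v w, Commute T (adjoint (ψ v) ∘L ψ w))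
    (hT : Intertwines ψ T T') : Intertwines ψ (star T) (star T') := fun v => by
  refine hψ.ext_adjoint fun w => ?_
  have hstar : Commute (star T) (adjoint (ψ w) ∘L ψ v) := by
    simpa only [star_eq_adjoint, adjoint_comp, adjoint_adjoint] using (hcomm v w).star_star
  calc adjoint (ψ w) ∘L star T' ∘L ψ v
      = star T ∘L adjoint (ψ w) ∘L ψ v := by
        rw [← comp_assoc, hT.adjoint_comp_star, comp_assoc]
    _ = adjoint (ψ w) ∘L ψ v ∘L star T := hstar.eq

theorem commute_comp_adjoint (hT : Intertwines ψ T T')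
    (hstar : Intertwines ψ (star T) (star T')) (v w : X) :
    Commute T' (ψ v ∘L adjoint (ψ w)) := by
  have hadjoint : adjoint (ψ w) ∘L T' = T ∘L adjoint (ψ w) := by
    simpa only [star_star] using hstar.adjoint_comp_star w
  calc T' ∘L ψ v ∘L adjoint (ψ w)
      = ψ v ∘L T ∘L adjoint (ψ w) := by rw [← comp_assoc, hT, comp_assoc]
    _ = (ψ v ∘L adjoint (ψ w)) ∘L T' := by rw [comp_assoc, hadjoint]

end Intertwines

section Lift

theorem norm_sqrt_adjoint_comp_self_apply [CompleteSpace H] [CompleteSpace K] (A : H →L[ℂ] K)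
    (x : H) : ‖CFC.sqrt (adjoint A ∘L A) x‖ = ‖A x‖ := by
  have hpos : 0 ≤ adjoint A ∘L A := (nonneg_iff_isPositive _).2 (isPositive_adjoint_comp_self A)
  have hsqrt :
      adjoint (CFC.sqrt (adjoint A ∘L A)) ∘L CFC.sqrt (adjoint A ∘L A) = adjoint A ∘L A := by
    rw [← star_eq_adjoint, (CFC.sqrt_nonneg (adjoint A ∘L A)).isSelfAdjoint.star_eq]
    exact CFC.sqrt_mul_sqrt_self _ hpos
  rw [apply_norm_eq_sqrt_inner_adjoint_left, apply_norm_eq_sqrt_inner_adjoint_left A, hsqrt]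

theorem norm_apply_apply_le_of_commute [CompleteSpace H] [CompleteSpace K] {A : H →L[ℂ] K}
    {T : H →L[ℂ] H} (hT : Commute T (adjoint A ∘L A)) (x : H) : ‖A (T x)‖ ≤ ‖T‖ * ‖A x‖ := by
  have hsqrt : Commute T (CFC.sqrt (adjoint A ∘L A)) := by
    rw [CFC.sqrt_eq_cfc]
    exact (hT.symm.cfc_nnreal _).symm
  calc ‖A (T x)‖ = ‖(CFC.sqrt (adjoint A ∘L A) * T) x‖ :=
        (norm_sqrt_adjoint_comp_self_apply A (T x)).symm
    _ = ‖T (CFC.sqrt (adjoint A ∘L A) x)‖ := by rw [← hsqrt.eq]; rfl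
    _ ≤ ‖T‖ * ‖A x‖ := by
        rw [← norm_sqrt_adjoint_comp_self_apply A]
        exact T.le_opNorm _

variable {ι : Type*} [Fintype ι]

/-- The operator `(hᵢ) ↦ ∑ i, A i hᵢ` on the Hilbert space sum of copies of `H`. -/
noncomputable def rowOperator (A : ι → H →L[ℂ] K) : PiLp 2 (fun _ : ι => H) →L[ℂ] K :=
  ∑ i, A i ∘L PiLp.proj 2 (fun _ : ι => H) i

theorem rowOperator_apply (A : ι → H →L[ℂ] K) (x : PiLp 2 (fun _ : ι => H)) :
    rowOperator A x = ∑ i, A i (x i) := by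
  simp [rowOperator, sum_apply]

theorem adjoint_rowOperator_apply [CompleteSpace H] [CompleteSpace K] (A : ι → H →L[ℂ] K) (y : K) :
    adjoint (rowOperator A) y = WithLp.toLp 2 fun i => adjoint (A i) y := by
  refine ext_inner_left ℂ fun x => ?_
  simp [adjoint_inner_right, rowOperator_apply, PiLp.inner_apply, sum_inner]

/-- The diagonal operator `(hᵢ) ↦ (T hᵢ)` on the Hilbert space sum of copies of `H`. -/
noncomputable def diagonalOperator (ι : Type*) [Fintype ι] (T : H →L[ℂ] H) :
    PiLp 2 (fun _ : ι => H) →L[ℂ] PiLp 2 (fun _ : ι => H) :=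
  (PiLp.continuousLinearEquiv 2 ℂ fun _ : ι => H).symm ∘L
    ContinuousLinearMap.piMap (fun _ : ι => T) ∘L
    (PiLp.continuousLinearEquiv 2 ℂ fun _ : ι => H : _ →L[ℂ] ι → H)

theorem diagonalOperator_apply (T : H →L[ℂ] H) (x : PiLp 2 (fun _ : ι => H)) :
    diagonalOperator ι T x = WithLp.toLp 2 fun i => T (x i) := rfl

theorem norm_diagonalOperator_le (T : H →L[ℂ] H) : ‖diagonalOperator ι T‖ ≤ ‖T‖ := by
  refine opNorm_le_bound _ (norm_nonneg T) fun x => ?_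
  refine le_of_sq_le_sq ?_ (by positivity)
  calc ‖diagonalOperator ι T x‖ ^ 2 = ∑ i, ‖T (x i)‖ ^ 2 := PiLp.norm_sq_eq_of_L2 _ _
    _ ≤ ∑ i, (‖T‖ * ‖x i‖) ^ 2 := by gcongr; exact T.le_opNorm _
    _ = (‖T‖ * ‖x‖) ^ 2 := by simp only [mul_pow, PiLp.norm_sq_eq_of_L2, Finset.mul_sum]

theorem commute_diagonalOperator_adjoint_comp_rowOperator [CompleteSpace H] [CompleteSpace K]
    {A : ι → H →L[ℂ] K} {T : H →L[ℂ] H} (hT : ∀ i j, Commute T (adjoint (A i) ∘L A j)) :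
    Commute (diagonalOperator ι T) (adjoint (rowOperator A) ∘L rowOperator A) := by
  ext x i
  have hcomm (j : ι) : T (adjoint (A i) (A j (x j))) = adjoint (A i) (A j (T (x j))) :=
    DFunLike.congr_fun (hT i j).eq (x j)
  simp [diagonalOperator_apply, adjoint_rowOperator_apply, rowOperator_apply, hcomm]

theorem norm_sum_apply_apply_le_of_commute [CompleteSpace H] [CompleteSpace K] {A : ι → H →L[ℂ] K}
    {T : H →L[ℂ] H} (hT : ∀ i j, Commute T (adjoint (A i) ∘L A j)) (x : ι → H) :
    ‖∑ i, A i (T (x i))‖ ≤ ‖T‖ * ‖∑ i, A i (x i)‖ := by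
  have hrow := norm_apply_apply_le_of_commute
    (commute_diagonalOperator_adjoint_comp_rowOperator hT) (WithLp.toLp 2 x)
  simp only [rowOperator_apply, diagonalOperator_apply] at hrow
  exact hrow.trans (by gcongr; exact norm_diagonalOperator_le T)

theorem exists_intertwines [CompleteSpace H] [CompleteSpace K] (hψ : HasDenseSpan ψ)
    {T : H →L[ℂ] H} (hT : ∀ v w, Commute T (adjoint (ψ v) ∘L ψ w)) :
    ∃ T' : K →L[ℂ] K, Intertwines ψ T T' := by
  let P (A : H →L[ℂ] H) : (X →₀ H) →ₗ[ℂ] K :=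
    Finsupp.lsum ℂ fun v => ((ψ v ∘L A : H →L[ℂ] K) : H →ₗ[ℂ] K)
  have hP_single (A : H →L[ℂ] H) (v : X) (h : H) : P A (Finsupp.single v h) = ψ v (A h) := by
    simp [P]
  have hdense : DenseRange (P 1) := by
    refine hψ.mono (Submodule.span_le.2 ?_ : _ ≤ LinearMap.range (P 1))
    rintro _ ⟨v, h, rfl⟩
    exact ⟨Finsupp.single v h, hP_single 1 v h⟩
  have hP_apply (A : H →L[ℂ] H) (f : X →₀ H) :
      P A f = ∑ v : f.support, ψ v (A (f v)) :=
    (Finset.sum_coe_sort f.support fun v => ψ v (A (f v))).symm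
  have hbound (f : X →₀ H) : ‖P T f‖ ≤ ‖T‖ * ‖P 1 f‖ := by
    rw [hP_apply, hP_apply]
    exact norm_sum_apply_apply_le_of_commute (A := fun v : f.support => ψ v)
      (fun v w => hT v w) fun v => f v
  refine ⟨(P T).extendOfNorm (P 1), fun v => ContinuousLinearMap.ext fun h => ?_⟩
  simpa only [hP_single, comp_apply, one_apply_eq_self] using
    LinearMap.extendOfNorm_eq hdense ⟨‖T‖, hbound⟩ (Finsupp.single v h)

end Lift

end Intertwining

universe u₁ u₂ u₃ u₄ u₅

section Dilation

variable {H : Type u₁} {K : Type u₂} {G : Type u₃}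
  [NormedAddCommGroup H] [InnerProductSpace ℂ H] [CompleteSpace H]
  [NormedAddCommGroup K] [InnerProductSpace ℂ K] [CompleteSpace K]
  [NormedAddCommGroup G] [InnerProductSpace ℂ G] [CompleteSpace G]
  {𝒱 : Submodule ℂ (H →L[ℂ] K)} {k : 𝒱 → 𝒱 → G →L[ℂ] G}

namespace IsTernaryKernel

section RKHS

variable {E : Type*} [NormedAddCommGroup E] [InnerProductSpace ℂ E] [CompleteSpace E]
  [RKHS ℂ E 𝒱 G]

/-- The kernel functions `k(·, v)` of a reproducing kernel Hilbert space with a ternary kernel `k`,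
as a linear map in `v`. -/
noncomputable def kerFunₗ (hk : IsTernaryKernel 𝒱 k) (hE : RKHS.kernel E = Matrix.of k) :
    𝒱 →ₗ[ℂ] (G →L[ℂ] E) where
  toFun := RKHS.kerFun E
  map_add' v w := by
    refine ContinuousLinearMap.ext fun g => RKHS.ext fun x => ?_
    simp [RKHS.kerFun_apply, hE, (hk.isLinearMap x).map_add]
  map_smul' c v := by
    refine ContinuousLinearMap.ext fun g => RKHS.ext fun x => ?_
    simp [RKHS.kerFun_apply, hE, (hk.isLinearMap x).map_smul]

theorem adjoint_kerFunₗ_comp (hk : IsTernaryKernel 𝒱 k) (hE : RKHS.kernel E = Matrix.of k)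
    (v w : 𝒱) : adjoint (hk.kerFunₗ hE v) ∘L hk.kerFunₗ hE w = k v w :=
  (RKHS.kernel_apply E v w).symm.trans (congrFun₂ hE v w)

theorem isTernaryHom_kerFunₗ (hk : IsTernaryKernel 𝒱 k) (hE : RKHS.kernel E = Matrix.of k) :
    IsTernaryHom 𝒱 (hk.kerFunₗ hE) := by
  intro s t r h
  rw [hk.adjoint_kerFunₗ_comp hE t r]
  refine ContinuousLinearMap.ext fun g => RKHS.ext fun x => ?_
  simp [kerFunₗ, RKHS.kerFun_apply, hE, hk.apply_triple]

theorem hasDenseSpan_kerFunₗ (hk : IsTernaryKernel 𝒱 k) (hE : RKHS.kernel E = Matrix.of k) :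
    HasDenseSpan (hk.kerFunₗ hE) :=
  Submodule.dense_iff_topologicalClosure_eq_top.2 (RKHS.kerFun_dense E)

end RKHS

theorem exists_dilation (hk : IsTernaryKernel 𝒱 k) (h𝒱 : IsTRO 𝒱) :
    ∃ (𝕂 : HilbertC.{max u₁ u₂ u₃}) (ψ : 𝒱 →ₗ[ℂ] (G →L[ℂ] 𝕂.carrier)), IsTernaryHom 𝒱 ψ ∧
      (∀ v w, adjoint (ψ v) ∘L ψ w = k v w) ∧ HasDenseSpan ψ := by
  have : Fact (Matrix.of k).PosSemidef := ⟨hk.posSemidef h𝒱⟩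
  have hE := RKHS.OfKernel.kernel_ofKernel (K := Matrix.of k)
  exact ⟨⟨RKHS.OfKernel (Matrix.of k)⟩, hk.kerFunₗ hE, hk.isTernaryHom_kerFunₗ hE,
    hk.adjoint_kerFunₗ_comp hE, hk.hasDenseSpan_kerFunₗ hE⟩

theorem of_intertwines {X F : Type*} [NormedAddCommGroup F] [InnerProductSpace ℂ F]
    [CompleteSpace F] {ψ : X → G →L[ℂ] F} {k' : 𝒱 → 𝒱 → F →L[ℂ] F} (hk : IsTernaryKernel 𝒱 k)
    (hψ : HasDenseSpan ψ) (hcomm : ∀ v w a b, Commute (k v w) (adjoint (ψ a) ∘L ψ b))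
    (hk' : ∀ v w, Intertwines ψ (k v w) (k' v w)) : IsTernaryKernel 𝒱 k' where
  isLinearMap v :=
    { map_add := fun x y => hψ.eq_of_intertwines (hk' v (x + y)) <| by
        simpa only [(hk.isLinearMap v).map_add] using (hk' v x).add (hk' v y)
      map_smul := fun c x => hψ.eq_of_intertwines (hk' v (c • x)) <| by
        simpa only [(hk.isLinearMap v).map_smul] using (hk' v x).smul c }
  star_apply v w := by
    have hstar := (hk' v w).star hψ (hcomm v w)
    rw [hk.star_apply] at hstar
    exact hψ.eq_of_intertwines hstar (hk' w v)
  apply_triple v w x y h := hψ.eq_of_intertwines (hk' v _) <| by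
    simpa only [hk.apply_triple] using (hk' v w).mul (hk' x y)

end IsTernaryKernel

theorem isTernaryKernel_of_isStarHomOn {R : Set (H →L[ℂ] H)}
    {π : (H →L[ℂ] H) → (G →L[ℂ] G)} (hπ : IsStarHomOn R π)
    (hR : ∀ v w : 𝒱, adjoint (v : H →L[ℂ] K) ∘L (w : H →L[ℂ] K) ∈ R) :
    IsTernaryKernel 𝒱 fun v w => π (adjoint (v : H →L[ℂ] K) ∘L (w : H →L[ℂ] K)) := by
  obtain ⟨hadd, hsmul, hmul, hstar⟩ := hπ
  refine ⟨fun v => ⟨fun x y => ?_, fun c x => ?_⟩, fun v w => ?_, fun v w x y h => ?_⟩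
  · rw [← hadd _ (hR v x) _ (hR v y), ← comp_add, Submodule.coe_add]
  · rw [← hsmul c _ (hR v x), ← comp_smul, Submodule.coe_smul]
  · rw [← hstar _ (hR v w), star_eq_adjoint, adjoint_comp, adjoint_adjoint]
  · rw [← hmul _ (hR v w) _ (hR x y)]
    rfl

end Dilation

theorem statement4_general
    {K₁ : Type u₁} {L₁ : Type u₂} {H₂ : Type u₃} {K₂ : Type u₄} {H : Type u₅}
    [NormedAddCommGroup K₁] [InnerProductSpace ℂ K₁] [CompleteSpace K₁]
    [NormedAddCommGroup L₁] [InnerProductSpace ℂ L₁] [CompleteSpace L₁]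
    [NormedAddCommGroup H₂] [InnerProductSpace ℂ H₂] [CompleteSpace H₂]
    [NormedAddCommGroup K₂] [InnerProductSpace ℂ K₂] [CompleteSpace K₂]
    [NormedAddCommGroup H] [InnerProductSpace ℂ H] [CompleteSpace H]
    {𝒰 : Submodule ℂ (K₁ →L[ℂ] L₁)} {𝒱 : Submodule ℂ (H₂ →L[ℂ] K₂)}
    (h𝒰 : IsTRO 𝒰) (h𝒱 : IsTRO 𝒱) {R𝒰 : Set (K₁ →L[ℂ] K₁)} {R𝒱 : Set (H₂ →L[ℂ] H₂)}
    (hR𝒰 : ∀ u₁ u₂ : 𝒰, adjoint (u₁ : K₁ →L[ℂ] L₁) ∘L (u₂ : K₁ →L[ℂ] L₁) ∈ R𝒰)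
    (hR𝒱 : ∀ v₁ v₂ : 𝒱, adjoint (v₁ : H₂ →L[ℂ] K₂) ∘L (v₂ : H₂ →L[ℂ] K₂) ∈ R𝒱)
    {π : (K₁ →L[ℂ] K₁) → (H →L[ℂ] H)} {ρ : (H₂ →L[ℂ] H₂) → (H →L[ℂ] H)}
    (hπ : IsStarHomOn R𝒰 π) (hρ : IsStarHomOn R𝒱 ρ)
    (hranges : ∀ b ∈ R𝒰, ∀ c ∈ R𝒱, Commute (π b) (ρ c)) :
    ∃ (𝕂 : HilbertC.{max u₃ u₄ u₅}) (𝕃 : HilbertC.{max u₁ u₂ u₃ u₄ u₅})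
      (φ : 𝒰 →ₗ[ℂ] (𝕂.carrier →L[ℂ] 𝕃.carrier)) (ψ : 𝒱 →ₗ[ℂ] (H →L[ℂ] 𝕂.carrier)),
      IsTernaryHom 𝒰 φ ∧ IsTernaryHom 𝒱 ψ ∧
      (∀ (u₁ u₂ : 𝒰) (v₁ v₂ : 𝒱),
        Commute (adjoint (φ u₁) ∘L φ u₂) (ψ v₁ ∘L adjoint (ψ v₂))) ∧
      (∀ (u₁ u₂ : 𝒰) (v₁ v₂ : 𝒱),
        π (adjoint (u₁ : K₁ →L[ℂ] L₁) ∘L (u₂ : K₁ →L[ℂ] L₁)) ∘L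
            ρ (adjoint (v₁ : H₂ →L[ℂ] K₂) ∘L (v₂ : H₂ →L[ℂ] K₂))
          = adjoint (ψ v₁) ∘L adjoint (φ u₁) ∘L φ u₂ ∘L ψ v₂) := by
  have hkπ := isTernaryKernel_of_isStarHomOn hπ hR𝒰
  obtain ⟨𝕂, ψ, hψ, hψρ, hdense⟩ := (isTernaryKernel_of_isStarHomOn hρ hR𝒱).exists_dilation h𝒱
  have hcomm (u₁ u₂ : 𝒰) (v₁ v₂ : 𝒱) :
      Commute (π (adjoint (u₁ : K₁ →L[ℂ] L₁) ∘L (u₂ : K₁ →L[ℂ] L₁)))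
        (adjoint (ψ v₁) ∘L ψ v₂) := by
    rw [hψρ]
    exact hranges _ (hR𝒰 u₁ u₂) _ (hR𝒱 v₁ v₂)
  choose k hk using fun u₁ u₂ => exists_intertwines hdense (hcomm u₁ u₂)
  obtain ⟨𝕃, φ, hφ, hφk, -⟩ := (hkπ.of_intertwines hdense hcomm hk).exists_dilation h𝒰
  refine ⟨𝕂, 𝕃, φ, ψ, hφ, hψ, fun u₁ u₂ v₁ v₂ => ?_, fun u₁ u₂ v₁ v₂ => ?_⟩
  · rw [hφk]
    exact (hk u₁ u₂).commute_comp_adjoint ((hk u₁ u₂).star hdense (hcomm u₁ u₂)) v₁ v₂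
  · calc _ = π (adjoint (u₁ : K₁ →L[ℂ] L₁) ∘L (u₂ : K₁ →L[ℂ] L₁)) ∘L adjoint (ψ v₁) ∘L ψ v₂ := by
          rw [hψρ]
      _ = adjoint (ψ v₁) ∘L ψ v₂ ∘L π (adjoint (u₁ : K₁ →L[ℂ] L₁) ∘L (u₂ : K₁ →L[ℂ] L₁)) :=
          (hcomm u₁ u₂ v₁ v₂).eq
      _ = adjoint (ψ v₁) ∘L (adjoint (φ u₁) ∘L φ u₂) ∘L ψ v₂ := by rw [hφk, hk]

/-- Commuting representations of the right C*-algebras of two TROs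
arise from semi-commuting ternary morphisms. -/
theorem statement4
    {K₁ L₁ H₂ K₂ H : Type u}
    [NormedAddCommGroup K₁] [InnerProductSpace ℂ K₁] [CompleteSpace K₁]
    [NormedAddCommGroup L₁] [InnerProductSpace ℂ L₁] [CompleteSpace L₁]
    [NormedAddCommGroup H₂] [InnerProductSpace ℂ H₂] [CompleteSpace H₂]
    [NormedAddCommGroup K₂] [InnerProductSpace ℂ K₂] [CompleteSpace K₂]
    [NormedAddCommGroup H] [InnerProductSpace ℂ H] [CompleteSpace H]
    (𝒰 : Submodule ℂ (K₁ →L[ℂ] L₁)) (𝒱 : Submodule ℂ (H₂ →L[ℂ] K₂))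
    (h𝒰closed : IsClosed (𝒰 : Set (K₁ →L[ℂ] L₁)))
    (h𝒱closed : IsClosed (𝒱 : Set (H₂ →L[ℂ] K₂)))
    (h𝒰tro : ∀ S ∈ 𝒰, ∀ T ∈ 𝒰, ∀ R ∈ 𝒰, S ∘L (adjoint T) ∘L R ∈ 𝒰)
    (h𝒱tro : ∀ S ∈ 𝒱, ∀ T ∈ 𝒱, ∀ R ∈ 𝒱, S ∘L (adjoint T) ∘L R ∈ 𝒱)
    (R𝒰 : Set (K₁ →L[ℂ] K₁)) (R𝒱 : Set (H₂ →L[ℂ] H₂))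
    (hR𝒰 : R𝒰 = closure
      ((Submodule.span ℂ {b : K₁ →L[ℂ] K₁ | ∃ u₁ ∈ 𝒰, ∃ u₂ ∈ 𝒰, b = (adjoint u₁) ∘L u₂}) :
        Set (K₁ →L[ℂ] K₁)))
    (hR𝒱 : R𝒱 = closure
      ((Submodule.span ℂ {b : H₂ →L[ℂ] H₂ | ∃ v₁ ∈ 𝒱, ∃ v₂ ∈ 𝒱, b = (adjoint v₁) ∘L v₂}) :
        Set (H₂ →L[ℂ] H₂)))
    (π : (K₁ →L[ℂ] K₁) → (H →L[ℂ] H)) (ρ : (H₂ →L[ℂ] H₂) → (H →L[ℂ] H))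
    (hπ : IsStarHomOn R𝒰 π) (hρ : IsStarHomOn R𝒱 ρ)
    (hranges : ∀ b ∈ R𝒰, ∀ c ∈ R𝒱, Commute (π b) (ρ c)) :
    ∃ (𝕂 𝕃 : HilbertC.{u})
      (φ : ↥𝒰 →ₗ[ℂ] (𝕂.carrier →L[ℂ] 𝕃.carrier))
      (ψ : ↥𝒱 →ₗ[ℂ] (H →L[ℂ] 𝕂.carrier)),
      IsTernaryHom 𝒰 φ ∧ IsTernaryHom 𝒱 ψ ∧
      (∀ (u₁ u₂ : 𝒰) (v₁ v₂ : 𝒱),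
        Commute ((adjoint (φ u₁)) ∘L (φ u₂)) ((ψ v₁) ∘L (adjoint (ψ v₂)))) ∧
      (∀ (u₁ u₂ : 𝒰) (v₁ v₂ : 𝒱),
        (π ((adjoint (u₁ : K₁ →L[ℂ] L₁)) ∘L (u₂ : K₁ →L[ℂ] L₁))) ∘L
            (ρ ((adjoint (v₁ : H₂ →L[ℂ] K₂)) ∘L (v₂ : H₂ →L[ℂ] K₂)))
          = (adjoint (ψ v₁)) ∘L (adjoint (φ u₁)) ∘L (φ u₂) ∘L (ψ v₂)) := by
  exact statement4_general ⟨h𝒰closed, h𝒰tro⟩ ⟨h𝒱closed, h𝒱tro⟩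
    (fun u₁ u₂ => hR𝒰 ▸ subset_closure (Submodule.subset_span ⟨u₁, u₁.2, u₂, u₂.2, rfl⟩))
    (fun v₁ v₂ => hR𝒱 ▸ subset_closure (Submodule.subset_span ⟨v₁, v₁.2, v₂, v₂.2, rfl⟩))
    hπ hρ hranges
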